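/- Let 1 ≤ k ≤ n and let A ∈ ℝ^{n×k} be a random matrix with i.i.d. standard Gaussian entries. Fix i ∈ [n] and let e_i be the i-th standard basis vector of ℝ^n. Then there is an absolute constant C > 0 such that for every γ ≥ 0, with probability at least 1 − 2·exp(−γ²), sup{ |⟨e_i, v⟩| : v ∈ range(A), ‖v‖₂ = 1 } ≤ C·( √(k/n) + γ/√n ). -/

import Mathlib

open MeasureTheory ProbabilityTheory

/-- The Euclidean (ℓ²) norm of a finite real vector. -/
noncomputable def l2R {n : ℕ} (x : Fin n → ℝ) : ℝ := Real.sqrt (∑ i, x i ^ 2)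

/-! The supremum of `|⟪u, v⟫|` over the unit vectors `v` of a subspace `K` is
`‖K.starProjection u‖`. For `K` spanned by the columns of a Gaussian matrix, rotation invariance
makes the law of this norm the same for all unit vectors `u`, so `u` may be replaced by the
direction of an independent standard Gaussian vector `g`. Given the columns, the projection of `g`
onto `K` is a standard Gaussian vector of `K`; Chernoff bounds for its squared norm from above and
for `‖g‖ ^ 2` from below then control the ratio `‖K.starProjection g‖ / ‖g‖`.
-/

open Real Submodule
open scoped RealInnerProductSpace Matrix

lemma integral_exp_mul_sq_gaussianReal {c : ℝ} (hc : c < 1 / 2) :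
    ∫ x, exp (c * x ^ 2) ∂(gaussianReal 0 1) = (√(1 - 2 * c))⁻¹ := by
  rw [integral_gaussianReal_eq_integral_smul (by simp)]
  simp only [gaussianPDFReal, smul_eq_mul, mul_assoc, ← exp_add, sub_zero, NNReal.coe_one, mul_one]
  have h_exponent (x : ℝ) : -x ^ 2 / 2 + c * x ^ 2 = -(1 / 2 - c) * x ^ 2 := by ring
  simp only [integral_const_mul, h_exponent, integral_gaussian]
  rw [← sqrt_inv, ← sqrt_inv, ← sqrt_mul (by positivity)]
  congr 1
  have h_half : 1 / 2 - c = (1 - 2 * c) / 2 := by ring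
  have h_ne : 1 - 2 * c ≠ 0 := by linarith
  rw [h_half]
  field_simp

lemma measure_le_of_forall_section_le {α β : Type*} [MeasurableSpace α] [MeasurableSpace β]
    {μ : Measure α} {ν : Measure β} [IsProbabilityMeasure μ] [IsProbabilityMeasure ν]
    {s : Set α} {T : Set (α × β)} {c : ENNReal} (hT : MeasurableSet T)
    (hs : ∀ y, μ s ≤ μ ((fun x => (x, y)) ⁻¹' T)) (hc : ∀ x, ν (Prod.mk x ⁻¹' T) ≤ c) :
    μ s ≤ c :=
  calc μ s = ∫⁻ _, μ s ∂ν := by simp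
    _ ≤ ∫⁻ y, μ ((fun x => (x, y)) ⁻¹' T) ∂ν := lintegral_mono hs
    _ = ∫⁻ x, ν (Prod.mk x ⁻¹' T) ∂μ := by
        rw [← Measure.prod_apply_symm hT, Measure.prod_apply hT]
    _ ≤ ∫⁻ _, c ∂μ := lintegral_mono hc
    _ = c := by simp

section Projection

variable {E : Type*} [NormedAddCommGroup E] [InnerProductSpace ℝ E]

lemma abs_real_inner_le_norm_starProjection_mul_norm (K : Submodule ℝ E)
    [K.HasOrthogonalProjection] (u : E) {v : E} (hv : v ∈ K) :
    |⟪u, v⟫| ≤ ‖K.starProjection u‖ * ‖v‖ := by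
  rw [← starProjection_eq_self_iff.2 hv, ← inner_starProjection_left_eq_right,
    starProjection_eq_self_iff.2 hv]
  exact abs_real_inner_le_norm _ _

lemma lt_norm_starProjection_iff (K : Submodule ℝ E) [K.HasOrthogonalProjection] (u : E) {r : ℝ}
    (hr : 0 ≤ r) :
    r < ‖K.starProjection u‖ ↔ ∃ v ∈ K, r * ‖v‖ < |⟪u, v⟫| := by
  constructor
  · intro h
    have h_inner : ⟪u, K.starProjection u⟫ = ‖K.starProjection u‖ ^ 2 := by
      rw [← real_inner_self_eq_norm_sq, inner_starProjection_left_eq_right,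
        starProjection_eq_self_iff.2 (starProjection_apply_mem K u)]
    refine ⟨K.starProjection u, starProjection_apply_mem K u, ?_⟩
    rw [h_inner, abs_of_nonneg (sq_nonneg _), sq]
    exact mul_lt_mul_of_pos_right h (hr.trans_lt h)
  · rintro ⟨v, hv, h⟩
    exact lt_of_mul_lt_mul_right
      (h.trans_le (abs_real_inner_le_norm_starProjection_mul_norm K u hv)) (norm_nonneg v)

variable [FiniteDimensional ℝ E] {ι : Type*}

lemma lowerSemicontinuous_norm_starProjection_span :
    LowerSemicontinuous
      fun p : (ι → E) × E => ‖(span ℝ (Set.range p.1)).starProjection p.2‖ := by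
  refine lowerSemicontinuous_iff_isOpen_preimage.2 fun r => ?_
  rcases lt_or_ge r 0 with hr | hr
  · have h_univ : (fun p : (ι → E) × E => ‖(span ℝ (Set.range p.1)).starProjection p.2‖) ⁻¹'
        Set.Ioi r = Set.univ := Set.eq_univ_of_forall fun p => hr.trans_le (norm_nonneg _)
    exact h_univ ▸ isOpen_univ
  · simp only [Set.preimage, Set.mem_Ioi, lt_norm_starProjection_iff _ _ hr,
      Finsupp.mem_span_range_iff_exists_finsupp, exists_exists_eq_and, Set.ofPred_exists,
      Finsupp.sum]
    exact isOpen_iUnion fun c => isOpen_lt (by fun_prop) (by fun_prop)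

lemma norm_starProjection_span_map (Q : E ≃ₗᵢ[ℝ] E) (a : ι → E) (u : E) :
    ‖(span ℝ (Set.range fun j => Q (a j))).starProjection (Q u)‖
      = ‖(span ℝ (Set.range a)).starProjection u‖ := by
  have h_span : span ℝ (Set.range fun j => Q (a j))
      = (span ℝ (Set.range a)).map (Q.toLinearEquiv : E →ₗ[ℝ] E) := by
    rw [map_span, ← Set.range_comp]
    rfl
  simp only [h_span, starProjection_map_apply, Q.symm_apply_apply, Q.norm_map]

end Projection

section StdGaussian

variable {E : Type*} [NormedAddCommGroup E] [InnerProductSpace ℝ E] [FiniteDimensional ℝ E]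
  [MeasurableSpace E] [BorelSpace E]

lemma mgf_norm_sq_stdGaussian {c : ℝ} (hc : c < 1 / 2) :
    mgf (fun x : E => ‖x‖ ^ 2) (stdGaussian E) c
      = (√(1 - 2 * c))⁻¹ ^ Module.finrank ℝ E := by
  set b := stdOrthonormalBasis ℝ E
  rw [mgf, stdGaussian_eq_map_pi_orthonormalBasis b,
    integral_map (Measurable.aemeasurable (by fun_prop))
      (Measurable.aestronglyMeasurable (by fun_prop))]
  have h_norm (x : Fin (Module.finrank ℝ E) → ℝ) : ‖∑ i, x i • b i‖ ^ 2 = ∑ i, x i ^ 2 := by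
    rw [← b.sum_sq_inner_right]
    simp [b.orthonormal.inner_right_fintype]
  simp only [h_norm, Finset.mul_sum, exp_sum]
  rw [integral_fintype_prod_eq_prod (fun _ x => exp (c * x ^ 2))]
  simp [integral_exp_mul_sq_gaussianReal hc]

lemma integrable_exp_mul_norm_sq_stdGaussian {c : ℝ} (hc : c < 1 / 2) :
    Integrable (fun x : E => exp (c * ‖x‖ ^ 2)) (stdGaussian E) := by
  refine .of_integral_ne_zero ?_
  have h_mgf := mgf_norm_sq_stdGaussian (E := E) hc
  have h_pos : 0 < 1 - 2 * c := by linarith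
  rw [mgf] at h_mgf
  rw [h_mgf]
  positivity

lemma measure_norm_sq_ge_le_exp_stdGaussian (s : ℝ) :
    (stdGaussian E).real {x | 4 * (Module.finrank ℝ E + s) ≤ ‖x‖ ^ 2} ≤ exp (-s) := by
  set d := Module.finrank ℝ E with hd
  have h_base : (√(1 - 2 * (1 / 4)))⁻¹ ≤ exp 1 := by
    rw [← sqrt_inv]
    refine (sqrt_le_iff.2 ⟨by norm_num, by norm_num⟩ : _ ≤ (2 : ℝ)).trans ?_
    linarith [add_one_le_exp 1]
  calc (stdGaussian E).real {x | 4 * (d + s) ≤ ‖x‖ ^ 2}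
      ≤ exp (-(1 / 4) * (4 * (d + s))) * (√(1 - 2 * (1 / 4)))⁻¹ ^ d := by
        rw [hd, ← mgf_norm_sq_stdGaussian (by norm_num)]
        exact measure_ge_le_exp_mul_mgf _ (by norm_num)
          (integrable_exp_mul_norm_sq_stdGaussian (by norm_num))
    _ ≤ exp (-(1 / 4) * (4 * (d + s))) * exp 1 ^ d := by gcongr
    _ = exp (-s) := by
        rw [← exp_nat_mul, ← exp_add]
        ring_nf

lemma measure_norm_sq_le_le_exp_stdGaussian :
    (stdGaussian E).real {x | ‖x‖ ^ 2 ≤ Module.finrank ℝ E / 4}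
      ≤ exp (-(Module.finrank ℝ E / 4)) := by
  set d := Module.finrank ℝ E with hd
  have h_base : (√(1 - 2 * (-1)))⁻¹ ≤ exp (-(1 / 2)) := by
    rw [exp_neg, exp_half]
    gcongr
    linarith [exp_one_lt_d9]
  calc (stdGaussian E).real {x | ‖x‖ ^ 2 ≤ d / 4}
      ≤ exp (-(-1) * (d / 4)) * (√(1 - 2 * (-1)))⁻¹ ^ d := by
        rw [hd, ← mgf_norm_sq_stdGaussian (by norm_num)]
        exact measure_le_le_exp_mul_mgf _ (by norm_num)
          (integrable_exp_mul_norm_sq_stdGaussian (by norm_num))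
    _ ≤ exp (-(-1) * (d / 4)) * exp (-(1 / 2)) ^ d := by gcongr
    _ = exp (-(d / 4)) := by
        rw [← exp_nat_mul, ← exp_add]
        ring_nf

lemma stdGaussian_map_orthogonalProjectionOnto (W : Submodule ℝ E) :
    (stdGaussian E).map W.orthogonalProjectionOnto = stdGaussian W := by
  apply Measure.ext_of_charFun
  ext t
  rw [charFun_apply, integral_map (by fun_prop) (Measurable.aestronglyMeasurable (by fun_prop))]
  simp_rw [inner_orthogonalProjectionOnto_eq_of_mem_right]
  rw [← charFun_apply, charFun_stdGaussian, charFun_stdGaussian, coe_norm]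

lemma measure_norm_sq_starProjection_ge_le_exp_stdGaussian (W : Submodule ℝ E) (s : ℝ) :
    (stdGaussian E).real {u | 4 * (Module.finrank ℝ W + s) ≤ ‖W.starProjection u‖ ^ 2}
      ≤ exp (-s) := by
  have h := measure_norm_sq_ge_le_exp_stdGaussian (E := W) s
  rwa [← stdGaussian_map_orthogonalProjectionOnto, map_measureReal_apply (by fun_prop)
    (measurableSet_le (by fun_prop) (by fun_prop))] at h

lemma measure_norm_starProjection_ge_le_exp_stdGaussian (W : Submodule ℝ E) {t s : ℝ} (ht : 0 ≤ t)
    (ht_one : t ≤ 1) (hts : 16 * (Module.finrank ℝ W + s) ≤ t ^ 2 * Module.finrank ℝ E) :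
    (stdGaussian E).real {u | t * ‖u‖ ≤ ‖W.starProjection u‖} ≤ 2 * exp (-s) := by
  have hs : s ≤ Module.finrank ℝ E / 4 := by
    have : t ^ 2 * Module.finrank ℝ E ≤ Module.finrank ℝ E :=
      mul_le_of_le_one_left (by positivity) (pow_le_one₀ ht ht_one)
    have : (0 : ℝ) ≤ Module.finrank ℝ W := by positivity
    have : (0 : ℝ) ≤ Module.finrank ℝ E := by positivity
    linarith
  have h_sub : {u | t * ‖u‖ ≤ ‖W.starProjection u‖} ⊆
      {u | 4 * (Module.finrank ℝ W + s) ≤ ‖W.starProjection u‖ ^ 2} ∪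
        {u | ‖u‖ ^ 2 ≤ Module.finrank ℝ E / 4} := by
    intro u hu
    refine or_iff_not_imp_right.2 fun h_large => ?_
    calc 4 * (Module.finrank ℝ W + s) ≤ t ^ 2 * (Module.finrank ℝ E / 4) := by linarith
      _ ≤ t ^ 2 * ‖u‖ ^ 2 := by gcongr; exact (not_le.1 h_large).le
      _ = (t * ‖u‖) ^ 2 := by ring
      _ ≤ ‖W.starProjection u‖ ^ 2 := by gcongr; exact hu
  calc (stdGaussian E).real {u | t * ‖u‖ ≤ ‖W.starProjection u‖}
      ≤ exp (-s) + exp (-(Module.finrank ℝ E / 4)) :=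
        (measureReal_mono h_sub).trans <| (measureReal_union_le _ _).trans <|
          add_le_add (measure_norm_sq_starProjection_ge_le_exp_stdGaussian W s)
            measure_norm_sq_le_le_exp_stdGaussian
    _ ≤ 2 * exp (-s) := by
        rw [two_mul]
        gcongr

variable {ι : Type*}

lemma measurableSet_mul_norm_le_norm_starProjection_span [Countable ι] (t : ℝ) :
    MeasurableSet {p : (ι → E) × E |
      t * ‖p.2‖ ≤ ‖(span ℝ (Set.range p.1)).starProjection p.2‖} :=
  measurableSet_le (by fun_prop) lowerSemicontinuous_norm_starProjection_span.measurable

variable [Fintype ι]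

lemma pi_stdGaussian_norm_starProjection_span_ge_le (t : ℝ) {e : E} (he : ‖e‖ = 1) (u : E) :
    Measure.pi (fun _ : ι => stdGaussian E)
        {a | t ≤ ‖(span ℝ (Set.range a)).starProjection e‖}
      ≤ Measure.pi (fun _ : ι => stdGaussian E)
        {a | t * ‖u‖ ≤ ‖(span ℝ (Set.range a)).starProjection u‖} := by
  set Q : E ≃ₗᵢ[ℝ] E := (span ℝ {‖u‖ • e - u})ᗮ.reflection
  have hQ : Q (‖u‖ • e) = u := reflection_sub (by simp [norm_smul, he])
  have hQ_law : MeasurePreserving (fun (a : ι → E) j => Q (a j))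
      (Measure.pi fun _ => stdGaussian E) (Measure.pi fun _ => stdGaussian E) :=
    measurePreserving_pi _ _ fun _ => ⟨Q.continuous.measurable, stdGaussian_map Q⟩
  have h_meas : MeasurableSet {a : ι → E |
      t * ‖u‖ ≤ ‖(span ℝ (Set.range a)).starProjection u‖} :=
    measurable_prodMk_right (measurableSet_mul_norm_le_norm_starProjection_span t)
  rw [← hQ_law.measure_preimage h_meas.nullMeasurableSet]
  refine measure_mono fun a (ha : t ≤ _) => ?_
  have h_proj : ‖(span ℝ (Set.range fun j => Q (a j))).starProjection u‖
      = ‖(span ℝ (Set.range a)).starProjection e‖ * ‖u‖ := by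
    conv_lhs => rw [← hQ]
    rw [norm_starProjection_span_map, map_smul, norm_smul, norm_norm, mul_comm]
  exact (mul_le_mul_of_nonneg_right ha (norm_nonneg u)).trans_eq h_proj.symm

lemma pi_stdGaussian_norm_starProjection_span_ge_le_exp {t s : ℝ} (ht : 0 ≤ t)
    (hts : 16 * (Fintype.card ι + s) ≤ t ^ 2 * Module.finrank ℝ E) {e : E} (he : ‖e‖ = 1) :
    Measure.pi (fun _ : ι => stdGaussian E)
        {a | t ≤ ‖(span ℝ (Set.range a)).starProjection e‖}
      ≤ ENNReal.ofReal (2 * exp (-s)) := by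
  rcases lt_or_ge 1 t with ht_one | ht_one
  · have h_empty : {a : ι → E | t ≤ ‖(span ℝ (Set.range a)).starProjection e‖} = ∅ :=
      Set.eq_empty_of_forall_notMem fun a ha => ht_one.not_ge <|
        ha.trans ((norm_starProjection_apply_le _ e).trans_eq he)
    simp [h_empty]
  refine measure_le_of_forall_section_le (ν := stdGaussian E)
    (measurableSet_mul_norm_le_norm_starProjection_span t)
    (pi_stdGaussian_norm_starProjection_span_ge_le t he) fun a => ?_
  have h_dim : (Module.finrank ℝ (span ℝ (Set.range a)) : ℝ) ≤ Fintype.card ι := by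
    exact_mod_cast finrank_range_le_card a
  have h_real := measure_norm_starProjection_ge_le_exp_stdGaussian (span ℝ (Set.range a)) ht ht_one
    (hts.trans' (by gcongr))
  rw [← ofReal_measureReal]
  exact ENNReal.ofReal_le_ofReal h_real

lemma le_measure_norm_starProjection_span_lt {Ω : Type*} [MeasurableSpace Ω] {μ : Measure Ω}
    {X : Ω → ι → E} (hX : HasLaw X (Measure.pi fun _ => stdGaussian E) μ) {t s : ℝ} (ht : 0 ≤ t)
    (hts : 16 * (Fintype.card ι + s) ≤ t ^ 2 * Module.finrank ℝ E) {e : E} (he : ‖e‖ = 1) :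
    ENNReal.ofReal (1 - 2 * exp (-s)) ≤
      μ {ω | ‖(span ℝ (Set.range (X ω))).starProjection e‖ < t} := by
  have h_meas : MeasurableSet {a : ι → E | t ≤ ‖(span ℝ (Set.range a)).starProjection e‖} := by
    simpa [he] using measurable_prodMk_right (y := e)
      (measurableSet_mul_norm_le_norm_starProjection_span (ι := ι) t)
  have h_tail := pi_stdGaussian_norm_starProjection_span_ge_le_exp ht hts he
  calc ENNReal.ofReal (1 - 2 * exp (-s))
      = 1 - ENNReal.ofReal (2 * exp (-s)) := by
        rw [ENNReal.ofReal_sub _ (by positivity), ENNReal.ofReal_one]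
    _ ≤ 1 - Measure.pi (fun _ : ι => stdGaussian E)
          {a | t ≤ ‖(span ℝ (Set.range a)).starProjection e‖} := tsub_le_tsub_left h_tail 1
    _ = μ {ω | ‖(span ℝ (Set.range (X ω))).starProjection e‖ < t} := by
        rw [← prob_compl_eq_one_sub h_meas]
        simpa only [Set.compl_ofPred, Set.mem_ofPred_eq, not_le] using
          (hX.measure_eq h_meas.compl).symm

end StdGaussian

lemma measurePreserving_swap_curry {ι κ X : Type*} [Fintype ι] [Fintype κ] [MeasurableSpace X]
    (ν : Measure X) [IsProbabilityMeasure ν] :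
    MeasurePreserving (fun (x : ι × κ → X) j i => x (i, j))
      (Measure.pi fun _ => ν) (Measure.pi fun _ => Measure.pi fun _ => ν) := by
  have h_swap := measurePreserving_piCongrLeft (fun _ : κ × ι => ν) (Equiv.prodComm ι κ)
  have h_curry : MeasurePreserving (MeasurableEquiv.curry κ ι X)
      (Measure.pi fun _ => ν) (Measure.pi fun _ => Measure.pi fun _ => ν) :=
    ⟨by fun_prop, by
      simpa only [Measure.infinitePi_eq_pi] using
        Measure.infinitePi_map_curry fun (_ : κ) (_ : ι) => ν⟩
  exact h_curry.comp h_swap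

lemma hasLaw_toLp_col {m ι Ω : Type*} [Fintype m] [Fintype ι] [MeasurableSpace Ω] {μ : Measure Ω}
    {A : Ω → Matrix m ι ℝ}
    (hA : HasLaw (fun ω (p : m × ι) => A ω p.1 p.2) (Measure.pi fun _ => gaussianReal 0 1) μ) :
    HasLaw (fun ω j => WithLp.toLp 2 ((A ω).col j))
      (Measure.pi fun _ => stdGaussian (EuclideanSpace ℝ m)) μ := by
  have h_toLp : MeasurePreserving (WithLp.toLp 2)
      (Measure.pi fun _ => gaussianReal 0 1) (stdGaussian (EuclideanSpace ℝ m)) :=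
    ⟨WithLp.measurable_toLp _ _, map_pi_eq_stdGaussian⟩
  exact ((measurePreserving_pi _ _ fun _ => h_toLp).comp
    (measurePreserving_swap_curry (gaussianReal 0 1))).fun_comp_hasLaw hA

lemma toLp_mulVec_mem_span_toLp_col {m ι : Type*} [Fintype ι] (A : Matrix m ι ℝ) (y : ι → ℝ) :
    WithLp.toLp 2 (A *ᵥ y) ∈ span ℝ (Set.range fun j => WithLp.toLp 2 (A.col j)) := by
  refine mem_span_range_iff_exists_fun ℝ |>.2 ⟨y, ?_⟩
  ext i
  simp [Matrix.mulVec, dotProduct, mul_comm]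

lemma l2R_eq_norm_toLp {n : ℕ} (x : Fin n → ℝ) : l2R x = ‖WithLp.toLp 2 x‖ := by
  simp [l2R, EuclideanSpace.norm_eq]

lemma sixteen_mul_add_sq_le_four_mul_sq_mul {k n γ : ℝ} (hk : 0 ≤ k) (hn : 0 < n) (hγ : 0 ≤ γ) :
    16 * (k + γ ^ 2) ≤ (4 * (√(k / n) + γ / √n)) ^ 2 * n := by
  have h_sq : (4 * (√(k / n) + γ / √n)) ^ 2 * n = 16 * (√k + γ) ^ 2 := by
    rw [sqrt_div hk]
    field_simp
    rw [sq_sqrt hn.le]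
    ring
  rw [h_sq, add_sq, sq_sqrt hk]
  have : 0 ≤ 2 * √k * γ := by positivity
  linarith

theorem gaussian_column_space_coordinate_bound_general {n k : ℕ} {Ω : Type*} [MeasurableSpace Ω]
    {μ : Measure Ω} {A : Ω → Matrix (Fin n) (Fin k) ℝ}
    (hA : HasLaw (fun ω (p : Fin n × Fin k) => A ω p.1 p.2)
      (Measure.pi fun _ => gaussianReal 0 1) μ)
    {u : Fin n → ℝ} (hu : l2R u = 1) {γ : ℝ} (hγ : 0 ≤ γ) :
    ENNReal.ofReal (1 - 2 * exp (-γ ^ 2)) ≤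
      μ {ω | ∀ v : Fin n → ℝ, (∃ y, v = A ω *ᵥ y) → l2R v = 1 →
        |u ⬝ᵥ v| ≤ 4 * (√((k : ℝ) / n) + γ / √n)} := by
  set t : ℝ := 4 * (√((k : ℝ) / n) + γ / √n)
  have hn : (0 : ℝ) < n := by
    rcases n.eq_zero_or_pos with rfl | hn
    · simp [l2R] at hu
    · exact_mod_cast hn
  have h_card : 16 * (Fintype.card (Fin k) + γ ^ 2)
      ≤ t ^ 2 * Module.finrank ℝ (EuclideanSpace ℝ (Fin n)) := by
    rw [Fintype.card_fin, finrank_euclideanSpace_fin]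
    exact sixteen_mul_add_sq_le_four_mul_sq_mul k.cast_nonneg hn hγ
  rw [l2R_eq_norm_toLp] at hu
  refine (le_measure_norm_starProjection_span_lt (hasLaw_toLp_col hA) (by positivity) h_card
    hu).trans (measure_mono ?_)
  rintro ω h_lt _ ⟨y, rfl⟩ hv
  have h_inner := abs_real_inner_le_norm_starProjection_mul_norm _ (WithLp.toLp 2 u)
    (toLp_mulVec_mem_span_toLp_col (A ω) y)
  rw [← l2R_eq_norm_toLp (A ω *ᵥ y), hv, mul_one] at h_inner
  simpa [EuclideanSpace.inner_toLp_toLp, dotProduct_comm] using h_inner.trans h_lt.le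

/-- per-coordinate coherence of a Gaussian column space.  There is an
absolute constant `C > 0` such that for an `n×k` matrix `A` with i.i.d. `N(0,1)`
entries and any fixed coordinate `i`, for every `γ ≥ 0`, with probability at least
`1 − 2·exp(−γ²)`, every unit vector `v` in the column space of `A` satisfies
`|⟨e_i, v⟩| ≤ C·(√(k/n) + γ/√n)`. -/
theorem gaussian_column_space_coordinate_bound :
    ∃ C : ℝ, 0 < C ∧
      ∀ (n k : ℕ), 1 ≤ k → k ≤ n →
        ∀ (Ω : Type) [MeasurableSpace Ω] (μ : Measure Ω), IsProbabilityMeasure μ →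
          ∀ (A : Ω → Matrix (Fin n) (Fin k) ℝ),
            Measurable (fun ω => fun p : Fin n × Fin k => A ω p.1 p.2) →
            Measure.map (fun ω => fun p : Fin n × Fin k => A ω p.1 p.2) μ =
              Measure.pi (fun _ : Fin n × Fin k => gaussianReal 0 1) →
            ∀ i : Fin n, ∀ γ : ℝ, 0 ≤ γ →
              ENNReal.ofReal (1 - 2 * Real.exp (-γ ^ 2)) ≤
                μ {ω | ∀ v : Fin n → ℝ, (∃ y, v = (A ω).mulVec y) → l2R v = 1 →
                  |v i| ≤ C * (Real.sqrt ((k : ℝ) / n) + γ / Real.sqrt n)} :=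
  ⟨4, by norm_num, fun _ _ _ _ _ _ _ _ _ hA hA_law i _ hγ => by
    simpa using gaussian_column_space_coordinate_bound_general ⟨hA.aemeasurable, hA_law⟩
      (u := Pi.single i 1) (by simp [l2R_eq_norm_toLp]) hγ⟩
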